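/- Let d ≥ 3 and let D ⊂ ℝ^d be a strongly convex domain. Then there exists A ≥ 1 such that g_D(x,v) ≤ A h_D(x,v) for all x ∈ D and v ∈ ℝ^d. -/

import Mathlib

open scoped RealInnerProductSpace ENNReal
open Metric Set Filter

noncomputable section

/-- Euclidean space `ℝ^d`. -/
abbrev Euc (d : ℕ) := EuclideanSpace ℝ (Fin d)

/-- The open unit disk in `ℝ²`. -/
def unitDisk : Set (Euc 2) := Metric.ball 0 1

/-- Partial derivative of `f` at `z` in the `i`-th coordinate direction. -/
def pd {d : ℕ} (i : Fin 2) (f : Euc 2 → Euc d) (z : Euc 2) : Euc d :=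
  fderiv ℝ f z (EuclideanSpace.single i 1)

/-- `f` is a conformal harmonic map on the unit disk: it is `C²`, its (vector)
Laplacian vanishes (equivalently, every component is harmonic), and at each point
its two partial derivatives are orthogonal and of equal norm. -/
def ConformalHarmonicOnDisk {d : ℕ} (f : Euc 2 → Euc d) : Prop :=
  ContDiffOn ℝ 2 f unitDisk ∧
  (∀ z ∈ unitDisk,
    fderiv ℝ (pd 0 f) z (EuclideanSpace.single 0 1)
      + fderiv ℝ (pd 1 f) z (EuclideanSpace.single 1 1) = 0) ∧
  (∀ z ∈ unitDisk, ‖pd 0 f z‖ = ‖pd 1 f z‖ ∧ ⟪pd 0 f z, pd 1 f z⟫ = 0)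

/-- The minimal (Forstnerič–Kalaj) metric of a domain `D ⊆ ℝ^d`:
`g_D(x,v) = inf {1/r : r > 0, f ∈ CH(𝔻, D), f 0 = x, f_x 0 = r • v}`. -/
def minMetric {d : ℕ} (D : Set (Euc d)) (x v : Euc d) : ℝ :=
  sInf {c : ℝ | ∃ r : ℝ, 0 < r ∧ c = 1 / r ∧
    ∃ f : Euc 2 → Euc d, ConformalHarmonicOnDisk f ∧ (∀ z ∈ unitDisk, f z ∈ D) ∧
      f 0 = x ∧ pd 0 f 0 = r • v}

/-- `γ` is a piecewise `C¹` curve on `[a, b]`. -/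
def PiecewiseC1On {d : ℕ} (γ : ℝ → Euc d) (a b : ℝ) : Prop :=
  ContinuousOn γ (Set.Icc a b) ∧
  ∃ (n : ℕ) (t : Fin (n + 2) → ℝ), Monotone t ∧ t 0 = a ∧ t (Fin.last (n + 1)) = b ∧
    ∀ i : Fin (n + 1), ContDiffOn ℝ 1 γ (Set.Icc (t i.castSucc) (t i.succ))

/-- The minimal pseudodistance `ρ_D`: infimum of minimal lengths of piecewise `C¹`
curves in `D` joining `x` to `y`. -/
def minDist {d : ℕ} (D : Set (Euc d)) (x y : Euc d) : ℝ :=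
  sInf {L : ℝ | ∃ γ : ℝ → Euc d, PiecewiseC1On γ 0 1 ∧
    (∀ t ∈ Set.Icc (0:ℝ) 1, γ t ∈ D) ∧ γ 0 = x ∧ γ 1 = y ∧
    L = ∫ t in (0:ℝ)..(1:ℝ), minMetric D (γ t) (deriv γ t)}

/-- The Gromov product `(x|y)_o` with respect to the minimal pseudodistance of `D`. -/
def gromovProd {d : ℕ} (D : Set (Euc d)) (o x y : Euc d) : ℝ :=
  (minDist D x o + minDist D y o - minDist D x y) / 2

/-- `D` is hyperbolic: the minimal pseudodistance is a genuine distance. -/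
def MinHyperbolic {d : ℕ} (D : Set (Euc d)) : Prop :=
  ∀ x ∈ D, ∀ y ∈ D, x ≠ y → 0 < minDist D x y

/-- The Hessian quadratic form of `u` at `x` in direction `v`. -/
def hessQ {d : ℕ} (u : Euc d → ℝ) (x v : Euc d) : ℝ :=
  fderiv ℝ (fun y => fderiv ℝ u y v) x v

/-- `D` is a bounded domain with `C²` boundary, described by a `C²` defining
function `u` on a neighborhood `U` of `∂D` with nonvanishing differential. -/
def IsC2BoundedDomain {d : ℕ} (D : Set (Euc d)) : Prop :=
  IsOpen D ∧ IsConnected D ∧ Bornology.IsBounded D ∧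
  ∃ (U : Set (Euc d)) (u : Euc d → ℝ), IsOpen U ∧ frontier D ⊆ U ∧ ContDiffOn ℝ 2 u U ∧
    D ∩ U = {x | x ∈ U ∧ u x < 0} ∧ frontier D = {x | x ∈ U ∧ u x = 0} ∧
    ∀ x ∈ frontier D, fderiv ℝ u x ≠ 0

/-- `D` is a bounded strongly minimally convex domain: it has a `C²` defining function
which is strongly minimally plurisubharmonic near `∂D`, i.e. the trace of its Hessian
on every 2-plane (spanned by an orthonormal pair `v, w`) is strictly positive. -/
def IsStronglyMinimallyConvex {d : ℕ} (D : Set (Euc d)) : Prop :=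
  IsOpen D ∧ IsConnected D ∧ Bornology.IsBounded D ∧
  ∃ (U : Set (Euc d)) (u : Euc d → ℝ), IsOpen U ∧ frontier D ⊆ U ∧ ContDiffOn ℝ 2 u U ∧
    D ∩ U = {x | x ∈ U ∧ u x < 0} ∧ frontier D = {x | x ∈ U ∧ u x = 0} ∧
    (∀ x ∈ frontier D, fderiv ℝ u x ≠ 0) ∧
    (∀ x ∈ U, ∀ v w : Euc d, ‖v‖ = 1 → ‖w‖ = 1 → ⟪v, w⟫ = 0 →
      0 < hessQ u x v + hessQ u x w)

/-- `D` is a bounded strongly convex domain: convex, with a `C²` defining function whose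
Hessian is positive definite on the tangent space at every boundary point
(equivalently, all principal curvatures of `∂D` w.r.t. the inner normal are positive). -/
def IsStronglyConvexDomain {d : ℕ} (D : Set (Euc d)) : Prop :=
  IsOpen D ∧ IsConnected D ∧ Bornology.IsBounded D ∧ Convex ℝ D ∧
  ∃ (U : Set (Euc d)) (u : Euc d → ℝ), IsOpen U ∧ frontier D ⊆ U ∧ ContDiffOn ℝ 2 u U ∧
    D ∩ U = {x | x ∈ U ∧ u x < 0} ∧ frontier D = {x | x ∈ U ∧ u x = 0} ∧
    (∀ x ∈ frontier D, fderiv ℝ u x ≠ 0) ∧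
    (∀ ξ ∈ frontier D, ∀ w : Euc d, w ≠ 0 → fderiv ℝ u ξ w = 0 → 0 < hessQ u ξ w)

/-- For `x ∈ D` with nearest boundary point `p`, the outer unit normal direction
`n_{π(x)} = (p - x)/‖p - x‖`. -/
def nvec {d : ℕ} (x p : Euc d) : Euc d := ‖p - x‖⁻¹ • (p - x)

/-- Normal component of `v` at `x` with nearest boundary point `p`. -/
def vN {d : ℕ} (x p v : Euc d) : Euc d := ⟪v, nvec x p⟫ • nvec x p

/-- Tangential component of `v` at `x` with nearest boundary point `p`. -/
def vT {d : ℕ} (x p v : Euc d) : Euc d := v - vN x p v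

/-- The intrinsic distance `H` on the boundary `∂D`: infimum of Euclidean lengths of
piecewise `C¹` curves in `∂D` joining two boundary points. -/
def bdist {d : ℕ} (D : Set (Euc d)) (ξ η : Euc d) : ℝ :=
  sInf {L : ℝ | ∃ α : ℝ → Euc d, PiecewiseC1On α 0 1 ∧
    (∀ t ∈ Set.Icc (0:ℝ) 1, α t ∈ frontier D) ∧ α 0 = ξ ∧ α 1 = η ∧
    L = ∫ t in (0:ℝ)..(1:ℝ), ‖deriv α t‖}

/-- `h(x) = δ_D(x)^{1/2}`. -/
def hfun {d : ℕ} (D : Set (Euc d)) (x : Euc d) : ℝ :=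
  Real.sqrt (Metric.infDist x (frontier D))

/-- The length of a curve with respect to the boundary Finsler metric
`F(x,v) = ‖v_N‖/(2 δ_D(x)) + ‖v_T‖/δ_D(x)^{1/2}`. -/
def Flen {d : ℕ} (D : Set (Euc d)) (π : Euc d → Euc d) (γ : ℝ → Euc d) : ℝ :=
  ∫ t in (0:ℝ)..(1:ℝ),
    (‖vN (γ t) (π (γ t)) (deriv γ t)‖ / (2 * Metric.infDist (γ t) (frontier D))
      + ‖vT (γ t) (π (γ t)) (deriv γ t)‖ / Real.sqrt (Metric.infDist (γ t) (frontier D)))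

/-- The filling Finsler metric `F`: the boundary Finsler metric on
`N = {δ_D ≤ ε}` and `c‖v‖` elsewhere. -/
def Fmet {d : ℕ} (D : Set (Euc d)) (π : Euc d → Euc d) (ε c : ℝ) (x v : Euc d) : ℝ :=
  if Metric.infDist x (frontier D) ≤ ε then
    ‖vN x (π x) v‖ / (2 * Metric.infDist x (frontier D))
      + ‖vT x (π x) v‖ / Real.sqrt (Metric.infDist x (frontier D))
  else c * ‖v‖

/-- The intrinsic distance `d_F` associated to the filling Finsler metric `F`. -/
def dF {d : ℕ} (D : Set (Euc d)) (π : Euc d → Euc d) (ε c : ℝ) (x y : Euc d) : ℝ :=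
  sInf {L : ℝ | ∃ γ : ℝ → Euc d, PiecewiseC1On γ 0 1 ∧
    (∀ t ∈ Set.Icc (0:ℝ) 1, γ t ∈ D) ∧ γ 0 = x ∧ γ 1 = y ∧
    L = ∫ t in (0:ℝ)..(1:ℝ), Fmet D π ε c (γ t) (deriv γ t)}

/-- The hyperbolic filling distance
`d_H(x,y) = 2 log((H(π x, π y) + h(x) ∨ h(y)) / √(h(x) h(y)))`. -/
def dH {d : ℕ} (D : Set (Euc d)) (π : Euc d → Euc d) (x y : Euc d) : ℝ :=
  2 * Real.log ((bdist D (π x) (π y) + max (hfun D x) (hfun D y)) /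
    Real.sqrt (hfun D x * hfun D y))

/-- `δ̂_D(x,v)`: the supremum over 2-dimensional linear subspaces `Λ ∋ v` of the
distance (in `ℝ≥0∞`, so `∞` if `x + Λ ⊆ D`) from `x` to `(x + Λ) \ D`. -/
def deltaHat {d : ℕ} (D : Set (Euc d)) (x v : Euc d) : ℝ≥0∞ :=
  ⨆ (Λ : Submodule ℝ (Euc d)) (_ : Module.finrank ℝ Λ = 2) (_ : v ∈ Λ),
    ⨅ (y : Euc d) (_ : y - x ∈ Λ ∧ y ∉ D), edist x y

/-- The positive parameter at which the ray `t ↦ x + t • v` exits the convex domain `D`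
(equal to `0`, by the `sInf ∅ = 0` convention, when the ray stays in `D`,
i.e. when the corresponding chord endpoint is the point at infinity). -/
def chordParam {d : ℕ} (D : Set (Euc d)) (x v : Euc d) : ℝ :=
  sInf {s : ℝ | 0 < s ∧ x + s • v ∉ D}

/-- The Hilbert Finsler metric `h_D(x,v) = (‖v‖/2)(1/‖x-a‖ + 1/‖x-b‖)` of a convex
domain, with the convention `1/‖x-∞‖ = 0` (here `‖x-b‖ = chordParam D x v • ‖v‖` and
`‖x-a‖ = chordParam D x (-v) • ‖v‖`, and division by zero is zero). -/
def hilbertFinsler {d : ℕ} (D : Set (Euc d)) (x v : Euc d) : ℝ :=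
  (1/2) * (1 / chordParam D x v + 1 / chordParam D x (-v))

/- The Hilbert distance of a convex domain: for `x ≠ y`,
`H_D(x,y) = ½ log((‖x-b‖ ‖y-a‖)/(‖x-a‖ ‖y-b‖))` where `a, x, y, b` are aligned on the
chord through `x, y`, with the convention that ratios involving the point at infinity
(detected by `chordParam = 0`) are equal to `1`. -/
open Classical in
def hilbertDist {d : ℕ} (D : Set (Euc d)) (x y : Euc d) : ℝ :=
  if x = y then 0 else
    (1/2) * Real.log
      ((if chordParam D x (y - x) = 0 then 1
        else chordParam D x (y - x) / (chordParam D x (y - x) - 1)) *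
       (if chordParam D x (x - y) = 0 then 1
        else (1 + chordParam D x (x - y)) / chordParam D x (x - y)))

/-!
A `C²` boundary with positive curvatures has, at every point `p` and with uniform radii `ρ ≤ R`, an
interior tangent ball contained in `D` and an enclosing tangent ball containing `D`. Let `x ∈ D` be
at depth `δ` below its nearest boundary point, with normal `n` there. If `x ± q` both lie in the
closure of `D`, the enclosing ball forces `|⟪q, n⟫| ≤ δ` and `‖q‖² ≤ 2Rδ`; conversely the interior
ball contains every `x + q` with `|⟪q, n⟫| ≤ δ / 2` and `‖q‖² < ρδ`. Hence the flat disk about `x`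
spanned by `v` and by a vector orthogonal to both `v` and `n`, which exists since `3 ≤ d`, lies in
`D` once its radius is `ρ / (2R)` times the shorter half of the chord through `x` along `v`. It is a
conformal harmonic competitor for the minimal metric, while the Hilbert metric is at least half the
inverse of that half-chord.
-/

section SecondOrder

lemma add_mul_add_half_mul_sq_le_of_le_deriv2 {f f' f'' : ℝ → ℝ} {a τ : ℝ} (hτ : 0 ≤ τ)
    (hf : ∀ s ∈ Icc 0 τ, HasDerivAt f (f' s) s) (hf' : ∀ s ∈ Icc 0 τ, HasDerivAt f' (f'' s) s)
    (ha : ∀ s ∈ Icc 0 τ, a ≤ f'' s) :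
    f 0 + τ * f' 0 + a / 2 * τ ^ 2 ≤ f τ := by
  rcases hτ.eq_or_lt with rfl | hτ
  · simp
  have hg : ∀ s ∈ Icc 0 τ, HasDerivAt (fun s ↦ f s - a / 2 * s ^ 2) (f' s - a * s) s :=
    fun s hs ↦ ((hf s hs).sub ((hasDerivAt_pow 2 s).const_mul (a / 2))).congr_deriv
      (by norm_num; ring)
  have hg' : ∀ s ∈ Icc 0 τ, HasDerivAt (fun s ↦ f' s - a * s) (f'' s - a) s :=
    fun s hs ↦ (hf' s hs).sub ((hasDerivAt_id s).const_mul a |>.congr_deriv (mul_one a))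
  have hconvex : ConvexOn ℝ (Icc 0 τ) (fun s ↦ f s - a / 2 * s ^ 2) :=
    convexOn_of_hasDerivWithinAt2_nonneg (convex_Icc 0 τ)
      (fun s hs ↦ (hg s hs).continuousAt.continuousWithinAt)
      (fun s hs ↦ (hg s (interior_subset hs)).hasDerivWithinAt)
      (fun s hs ↦ (hg' s (interior_subset hs)).hasDerivWithinAt)
      (fun s hs ↦ sub_nonneg.2 (ha s (interior_subset hs)))
  have hslope := hconvex.le_slope_of_hasDerivAt (left_mem_Icc.2 hτ.le) (right_mem_Icc.2 hτ.le) hτ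
    (hg 0 (left_mem_Icc.2 hτ.le))
  rw [slope_def_field, le_div_iff₀ (by linarith)] at hslope
  linarith

variable {E F : Type*} [NormedAddCommGroup E] [NormedSpace ℝ E] [NormedAddCommGroup F]
  [NormedSpace ℝ F] {U : Set E} {u : E → ℝ} {p w : E} {a τ : ℝ}

lemma hasDerivAt_comp_add_smul {f : E → F} {s : ℝ} (hf : DifferentiableAt ℝ f (p + s • w)) :
    HasDerivAt (fun t : ℝ ↦ f (p + t • w)) (fderiv ℝ f (p + s • w) w) s :=
  hf.hasFDerivAt.comp_hasDerivAt s <| by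
    simpa using ((hasDerivAt_id s).smul_const w).const_add p

lemma differentiableAt_fderiv_of_contDiffOn {f : E → F} (hU : IsOpen U)
    (hf : ContDiffOn ℝ 2 f U) {x : E} (hx : x ∈ U) : DifferentiableAt ℝ (fderiv ℝ f) x :=
  ((hf.contDiffAt (hU.mem_nhds hx)).fderiv_right (m := 1) (by norm_num)).differentiableAt
    (by norm_num)

lemma continuousOn_fderiv_fderiv_of_contDiffOn {f : E → F} (hU : IsOpen U)
    (hf : ContDiffOn ℝ 2 f U) : ContinuousOn (fderiv ℝ (fderiv ℝ f)) U :=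
  (hf.fderiv_of_isOpen hU (m := 1) (by norm_num)).continuousOn_fderiv_of_isOpen hU (by norm_num)

lemma add_fderiv_add_half_mul_sq_le (hU : IsOpen U) (hu : ContDiffOn ℝ 2 u U) (hτ : 0 ≤ τ)
    (hseg : ∀ s ∈ Icc 0 τ, p + s • w ∈ U)
    (ha : ∀ s ∈ Icc 0 τ, a ≤ fderiv ℝ (fderiv ℝ u) (p + s • w) w w) :
    u p + τ * fderiv ℝ u p w + a / 2 * τ ^ 2 ≤ u (p + τ • w) := by
  have hf' : ∀ s ∈ Icc 0 τ, HasDerivAt (fun t : ℝ ↦ fderiv ℝ u (p + t • w) w)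
      (fderiv ℝ (fderiv ℝ u) (p + s • w) w w) s := fun s hs ↦ by
    simpa using (hasDerivAt_comp_add_smul
      (differentiableAt_fderiv_of_contDiffOn hU hu (hseg s hs))).clm_apply (hasDerivAt_const s w)
  simpa using add_mul_add_half_mul_sq_le_of_le_deriv2 hτ
    (fun s hs ↦ hasDerivAt_comp_add_smul <|
      (hu.contDiffAt (hU.mem_nhds (hseg s hs))).differentiableAt (by norm_num)) hf' ha

lemma le_add_fderiv_add_half_mul_sq (hU : IsOpen U) (hu : ContDiffOn ℝ 2 u U) (hτ : 0 ≤ τ)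
    (hseg : ∀ s ∈ Icc 0 τ, p + s • w ∈ U)
    (ha : ∀ s ∈ Icc 0 τ, fderiv ℝ (fderiv ℝ u) (p + s • w) w w ≤ a) :
    u (p + τ • w) ≤ u p + τ * fderiv ℝ u p w + a / 2 * τ ^ 2 := by
  have hfderiv : fderiv ℝ (-u) = -fderiv ℝ u := funext fun x ↦ fderiv_neg
  have := add_fderiv_add_half_mul_sq_le (a := -a) hU hu.neg hτ hseg fun s hs ↦ by
    change _ ≤ fderiv ℝ (fderiv ℝ (-u)) _ w w
    rw [hfderiv, fderiv_neg]
    simpa using ha s hs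
  change (-u) p + τ * fderiv ℝ (-u) p w + _ ≤ (-u) _ at this
  simp only [hfderiv, Pi.neg_apply, neg_apply] at this
  linarith

end SecondOrder

section Compactness

lemma isCompact_frontier_of_isBounded {X : Type*} [PseudoMetricSpace X] [ProperSpace X] {D : Set X}
    (hD : Bornology.IsBounded D) : IsCompact (frontier D) :=
  hD.isCompact_closure.of_isClosed_subset isClosed_frontier frontier_subset_closure

lemma eventually_forall_mem_Icc_zero {X : Type*} {l : Filter X} {P : ℝ → X → Prop}
    (h : ∀ᶠ z in nhds (0 : ℝ) ×ˢ l, P z.1 z.2) :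
    ∀ᶠ z in nhds (0 : ℝ) ×ˢ l, ∀ τ ∈ Icc 0 z.1, P τ z.2 := by
  obtain ⟨S, hS, T, hT, hP⟩ := eventually_prod_iff.1 h
  obtain ⟨ε, hε, hεS⟩ := Metric.eventually_nhds_iff.1 hS
  filter_upwards [prod_mem_prod (Iio_mem_nhds hε) hT] with z hz τ hτ
  refine hP (hεS ?_) hz.2
  rw [Real.dist_0_eq_abs, abs_of_nonneg hτ.1]
  exact hτ.2.trans_lt hz.1

lemma exists_cthickening_subset_and_norm_le {X F : Type*} [PseudoMetricSpace X] [ProperSpace X]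
    [SeminormedAddCommGroup F] {K U : Set X} {f : X → F} (hK : IsCompact K) (hU : IsOpen U)
    (hKU : K ⊆ U) (hf : ContinuousOn f U) :
    ∃ ε > 0, cthickening ε K ⊆ U ∧ ∃ L > 0, ∀ y ∈ cthickening ε K, ‖f y‖ ≤ L := by
  obtain ⟨ε, hε, hεU⟩ := hK.exists_cthickening_subset_open hU hKU
  obtain ⟨L, hL⟩ := hK.cthickening.exists_bound_of_continuousOn (hf.mono hεU)
  exact ⟨ε, hε, hεU, max L 1, by positivity, fun y hy ↦ (hL y hy).trans (le_max_left _ _)⟩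

end Compactness

section DefiningFunction

/-- `u`, of class `C²` on the open set `U ⊇ ∂D`, is a defining function of `D`: near its boundary
`D` is the sublevel set `u < 0`, and `∂D` is a regular level set of `u`. -/
structure IsC2DefiningFunction {E : Type*} [NormedAddCommGroup E] [NormedSpace ℝ E]
    (D U : Set E) (u : E → ℝ) : Prop where
  isOpen : IsOpen U
  frontier_subset : frontier D ⊆ U
  contDiffOn : ContDiffOn ℝ 2 u U
  inter_eq : D ∩ U = {x | x ∈ U ∧ u x < 0}
  frontier_eq : frontier D = {x | x ∈ U ∧ u x = 0}
  fderiv_ne_zero : ∀ p ∈ frontier D, fderiv ℝ u p ≠ 0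

namespace IsC2DefiningFunction

variable {E : Type*} [NormedAddCommGroup E] [NormedSpace ℝ E] {D U : Set E} {u : E → ℝ} {p y : E}

lemma eq_zero (hu : IsC2DefiningFunction D U u) (hp : p ∈ frontier D) : u p = 0 :=
  (hu.frontier_eq.subset hp).2

lemma neg_of_mem (hu : IsC2DefiningFunction D U u) (hy : y ∈ D) (hyU : y ∈ U) : u y < 0 :=
  (hu.inter_eq.subset ⟨hy, hyU⟩).2

lemma mem_of_neg (hu : IsC2DefiningFunction D U u) (hyU : y ∈ U) (hy : u y < 0) : y ∈ D :=
  (hu.inter_eq.superset ⟨hyU, hy⟩).1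

lemma isOpen_domain (hu : IsC2DefiningFunction D U u) : IsOpen D :=
  disjoint_frontier_iff_isOpen.1 <| disjoint_left.2 fun _ hp hpD ↦
    (hu.neg_of_mem hpD (hu.frontier_subset hp)).ne (hu.eq_zero hp)

lemma continuousOn_fderiv (hu : IsC2DefiningFunction D U u) : ContinuousOn (fderiv ℝ u) U :=
  hu.contDiffOn.continuousOn_fderiv_of_isOpen hu.isOpen (by norm_num)

lemma continuousAt_fderiv_apply (hu : IsC2DefiningFunction D U u) (hp : p ∈ frontier D) (w : E) :
    ContinuousAt (fun z : ℝ × E × E ↦ fderiv ℝ u z.2.1 z.2.2) (0, p, w) := by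
  have hfderiv : ContinuousAt (fderiv ℝ u) p :=
    hu.continuousOn_fderiv.continuousAt (hu.isOpen.mem_nhds (hu.frontier_subset hp))
  exact (hfderiv.comp_of_eq (by fun_prop) rfl).clm_apply (by fun_prop)

lemma eventually_mul_fderiv_add_sq_neg (hu : IsC2DefiningFunction D U u) {p₀ w₀ : E} {b : ℝ}
    (hp₀ : p₀ ∈ frontier D) (hb : b < fderiv ℝ (fderiv ℝ u) p₀ w₀ w₀) :
    ∀ᶠ z : ℝ × E × E in nhds (0, p₀, w₀), z.2.1 ∈ frontier D → 0 ≤ z.1 →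
      z.2.1 + z.1 • z.2.2 ∈ D → z.1 * fderiv ℝ u z.2.1 z.2.2 + b / 2 * z.1 ^ 2 < 0 := by
  have hU : U ∈ nhds p₀ := hu.isOpen.mem_nhds (hu.frontier_subset hp₀)
  have hhess : ContinuousAt (fderiv ℝ (fderiv ℝ u)) p₀ :=
    (continuousOn_fderiv_fderiv_of_contDiffOn hu.isOpen hu.contDiffOn).continuousAt hU
  have hpoint : ContinuousAt (fun z : ℝ × E × E ↦ z.2.1 + z.1 • z.2.2) (0, p₀, w₀) := by fun_prop
  have hhess_point : ContinuousAt (fun z : ℝ × E × E ↦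
      fderiv ℝ (fderiv ℝ u) (z.2.1 + z.1 • z.2.2) z.2.2 z.2.2) (0, p₀, w₀) :=
    ((hhess.comp_of_eq hpoint (by simp)).clm_apply (by fun_prop)).clm_apply (by fun_prop)
  have hnear : ∀ᶠ z : ℝ × E × E in nhds (0, p₀, w₀), z.2.1 + z.1 • z.2.2 ∈ U ∧
      b ≤ fderiv ℝ (fderiv ℝ u) (z.2.1 + z.1 • z.2.2) z.2.2 z.2.2 :=
    (hpoint.eventually_mem (by simpa using hU)).and
      ((hhess_point.eventually_const_lt (by simpa using hb)).mono fun _ h ↦ h.le)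
  rw [nhds_prod_eq] at hnear ⊢
  filter_upwards [eventually_forall_mem_Icc_zero (P := fun τ q ↦ q.1 + τ • q.2 ∈ U ∧
    b ≤ fderiv ℝ (fderiv ℝ u) (q.1 + τ • q.2) q.2 q.2) hnear] with ⟨τ, p, w⟩ hseg hp hτ hD
  have htaylor := add_fderiv_add_half_mul_sq_le hu.isOpen hu.contDiffOn hτ
    (fun s hs ↦ (hseg s hs).1) fun s hs ↦ (hseg s hs).2
  rw [hu.eq_zero hp] at htaylor
  linarith [hu.neg_of_mem hD (hseg τ ⟨hτ, le_rfl⟩).1]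

lemma eventually_mul_le_neg_fderiv (hu : IsC2DefiningFunction D U u) {p₀ w₀ : E}
    (hp₀ : p₀ ∈ frontier D)
    (hpos : fderiv ℝ u p₀ w₀ = 0 → 0 < fderiv ℝ (fderiv ℝ u) p₀ w₀ w₀) :
    ∃ k > 0, ∀ᶠ z : ℝ × E × E in nhds (0, p₀, w₀), z.2.1 ∈ frontier D → 0 < z.1 →
      z.2.1 + z.1 • z.2.2 ∈ D → k * z.1 ≤ -fderiv ℝ u z.2.1 z.2.2 := by
  have hcont := hu.continuousAt_fderiv_apply hp₀ w₀
  have hfst : ContinuousAt (fun z : ℝ × E × E ↦ z.1) (0, p₀, w₀) := continuousAt_fst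
  rcases lt_trichotomy (fderiv ℝ u p₀ w₀) 0 with hneg | hzero | hpos'
  · refine ⟨1, one_pos, ?_⟩
    filter_upwards [hfst.eventually_lt hcont.neg (by simpa using hneg)] with z hz _ _ _
    rw [one_mul]
    exact hz.le
  · have ha := hpos hzero
    refine ⟨_, div_pos ha (by norm_num : (0 : ℝ) < 4), ?_⟩
    filter_upwards [hu.eventually_mul_fderiv_add_sq_neg hp₀ (half_lt_self ha)] with z hz hp hτ hD
    nlinarith [hz hp hτ.le hD]
  -- Short chords in an outward direction leave `D`, so there is nothing to bound.
  · set b := fderiv ℝ (fderiv ℝ u) p₀ w₀ w₀ - 1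
    refine ⟨1, one_pos, ?_⟩
    have hsum : ∀ᶠ z : ℝ × E × E in nhds (0, p₀, w₀),
        0 < fderiv ℝ u z.2.1 z.2.2 + b / 2 * z.1 :=
      (hcont.add (hfst.const_mul (b / 2))).eventually_const_lt (by simpa using hpos')
    filter_upwards [hsum, hu.eventually_mul_fderiv_add_sq_neg hp₀ (sub_one_lt _)]
      with z hz hz' hp hτ hD
    nlinarith [hz' hp hτ.le hD, mul_pos hτ hz]

variable [FiniteDimensional ℝ E]

lemma exists_forall_smul_mem_mul_le_neg_fderiv (hu : IsC2DefiningFunction D U u)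
    (hD : Bornology.IsBounded D)
    (hpos : ∀ p ∈ frontier D, ∀ w ≠ 0, fderiv ℝ u p w = 0 → 0 < fderiv ℝ (fderiv ℝ u) p w w) :
    ∃ c > 0, ∀ p ∈ frontier D, ∀ w ∈ sphere (0 : E) 1, ∀ τ ∈ Ioc 0 c, p + τ • w ∈ D →
      c * τ ≤ -fderiv ℝ u p w := by
  have hcompact : IsCompact (frontier D ×ˢ sphere (0 : E) 1) :=
    (isCompact_frontier_of_isBounded hD).prod (isCompact_sphere 0 1)
  have huniform : ∀ᶠ c : ℝ in nhds 0, ∀ q ∈ frontier D ×ˢ sphere (0 : E) 1, q.1 ∈ frontier D →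
      ∀ τ ∈ Ioc 0 c, q.1 + τ • q.2 ∈ D → c * τ ≤ -fderiv ℝ u q.1 q.2 := by
    refine hcompact.eventually_forall_of_forall_eventually (P := fun c q ↦ q.1 ∈ frontier D →
      ∀ τ ∈ Ioc 0 c, q.1 + τ • q.2 ∈ D → c * τ ≤ -fderiv ℝ u q.1 q.2) ?_
    rintro ⟨p₀, w₀⟩ ⟨hp₀, hw₀⟩
    obtain ⟨k, hk, hlocal⟩ := hu.eventually_mul_le_neg_fderiv hp₀
      (hpos p₀ hp₀ w₀ (ne_of_mem_sphere hw₀ one_ne_zero))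
    rw [nhds_prod_eq] at hlocal ⊢
    filter_upwards [eventually_forall_mem_Icc_zero (P := fun τ q ↦ q.1 ∈ frontier D → 0 < τ →
      q.1 + τ • q.2 ∈ D → k * τ ≤ -fderiv ℝ u q.1 q.2) hlocal,
      prod_mem_prod (Iio_mem_nhds hk) univ_mem] with ⟨c, p, w⟩ hz hck hp τ hτ hD
    exact (mul_le_mul_of_nonneg_right hck.1.le hτ.1.le).trans
      (hz τ (Ioc_subset_Icc_self hτ) hp hτ.1 hD)
  obtain ⟨c, hc, hc0⟩ :=
    ((huniform.filter_mono nhdsWithin_le_nhds).and (self_mem_nhdsWithin (s := Ioi 0))).exists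
  exact ⟨c, hc0, fun p hp w hw ↦ hc (p, w) ⟨hp, hw⟩ hp⟩

lemma exists_forall_mul_norm_sub_sq_le_neg_fderiv (hu : IsC2DefiningFunction D U u)
    (hDb : Bornology.IsBounded D) (hDc : Convex ℝ D)
    (hpos : ∀ p ∈ frontier D, ∀ w ≠ 0, fderiv ℝ u p w = 0 → 0 < fderiv ℝ (fderiv ℝ u) p w w) :
    ∃ k > 0, ∀ p ∈ frontier D, ∀ y ∈ D, k * ‖y - p‖ ^ 2 ≤ -fderiv ℝ u p (y - p) := by
  obtain ⟨c, hc, hlocal⟩ := hu.exists_forall_smul_mem_mul_le_neg_fderiv hDb hpos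
  set T := max (diam (closure D)) c
  have hT : 0 < T := hc.trans_le (le_max_right _ _)
  refine ⟨c * (c / T), by positivity, fun p hp y hy ↦ ?_⟩
  have hy_int : y ∈ interior D := hu.isOpen_domain.interior_eq.symm ▸ hy
  have hτT : ‖y - p‖ ≤ T := by
    rw [← dist_eq_norm]
    exact (dist_le_diam_of_mem hDb.closure (subset_closure hy) hp.1).trans (le_max_left _ _)
  have hτ : 0 < ‖y - p‖ := norm_pos_iff.2 <| sub_ne_zero.2 <|
    ne_of_mem_of_not_mem hy_int hp.2
  -- Convexity lets us shrink the chord `[p, y]` by the factor `c / T` into the range of `hlocal`.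
  have hmem : p + (c / T * ‖y - p‖) • ‖y - p‖⁻¹ • (y - p) ∈ D := by
    rw [smul_smul, mul_inv_cancel_right₀ hτ.ne']
    exact interior_subset <| hDc.add_smul_sub_mem_interior' hp.1 hy_int
      ⟨by positivity, (div_le_one hT).2 (le_max_right _ _)⟩
  have hshort : c / T * ‖y - p‖ ≤ c := by
    rw [div_mul_comm]
    exact mul_le_of_le_one_left hc.le ((div_le_one hT).2 hτT)
  have hdir := hlocal p hp (‖y - p‖⁻¹ • (y - p)) (by simp [norm_smul, hτ.ne'])
    (c / T * ‖y - p‖) ⟨by positivity, hshort⟩ hmem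
  rw [map_smul, smul_eq_mul, ← mul_neg, ← div_eq_inv_mul, le_div_iff₀ hτ] at hdir
  linarith

end IsC2DefiningFunction

end DefiningFunction

section TangentBalls

variable {E : Type*} [NormedAddCommGroup E] [InnerProductSpace ℝ E]

/-- `D` contains the ball of radius `ρ` and lies in the closed ball of radius `R`, both of which
are tangent at `p` to the hyperplane through `p` with unit normal `n`, on the side of `-n`. -/
structure HasTangentBallsAt (D : Set E) (ρ R : ℝ) (p n : E) : Prop where
  norm_eq_one : ‖n‖ = 1
  ball_subset : ball (p - ρ • n) ρ ⊆ D
  subset_closedBall : D ⊆ closedBall (p - R • n) R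

lemma norm_sub_sub_smul_sq {n : E} (hn : ‖n‖ = 1) (p y : E) (r : ℝ) :
    ‖y - (p - r • n)‖ ^ 2 = ‖y - p‖ ^ 2 - 2 * r * ⟪p - y, n⟫ + r ^ 2 := by
  rw [sub_sub_eq_add_sub, add_sub_right_comm, norm_add_sq_real, real_inner_smul_right, norm_smul,
    hn, mul_one, Real.norm_eq_abs, sq_abs, ← neg_sub p y, inner_neg_left, norm_neg]
  ring

lemma mem_ball_sub_smul_iff {n p y : E} {r : ℝ} (hn : ‖n‖ = 1) (hr : 0 ≤ r) :
    y ∈ ball (p - r • n) r ↔ ‖y - p‖ ^ 2 < 2 * r * ⟪p - y, n⟫ := by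
  rw [mem_ball_iff_norm, ← sq_lt_sq₀ (norm_nonneg _) hr, norm_sub_sub_smul_sq hn, ← sub_neg]
  constructor <;> intro h <;> linarith

lemma mem_closedBall_sub_smul_iff {n p y : E} {r : ℝ} (hn : ‖n‖ = 1) (hr : 0 ≤ r) :
    y ∈ closedBall (p - r • n) r ↔ ‖y - p‖ ^ 2 ≤ 2 * r * ⟪p - y, n⟫ := by
  rw [mem_closedBall_iff_norm, ← sq_le_sq₀ (norm_nonneg _) hr, norm_sub_sub_smul_sq hn]
  constructor <;> intro h <;> linarith

namespace HasTangentBallsAt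

variable {D : Set E} {ρ R δ : ℝ} {x p n q : E}

lemma radius_le (h : HasTangentBallsAt D ρ R p n) (hρ : 0 < ρ) : ρ ≤ R := by
  have : Nontrivial E := ⟨n, 0, norm_ne_zero_iff.1 (by simp [h.norm_eq_one])⟩
  have hsub := h.ball_subset.trans h.subset_closedBall
  have hR : 0 ≤ R := nonempty_closedBall.1 ((nonempty_ball.2 hρ).mono hsub)
  have hdiam := diam_mono hsub isBounded_closedBall
  rw [diam_ball_eq _ hρ.le, diam_closedBall_eq _ hR] at hdiam
  linarith

lemma closure_subset_closedBall (h : HasTangentBallsAt D ρ R p n) :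
    closure D ⊆ closedBall (p - R • n) R :=
  closure_minimal h.subset_closedBall isClosed_closedBall

lemma eq_add_smul_of_ball_subset (h : HasTangentBallsAt D ρ R p n) (hR : 0 < R)
    (hδ : 0 < dist x p) (hball : ball x (dist x p) ⊆ D) : p = x + dist x p • n := by
  have hmem : x + dist x p • n ∈ closedBall (p - R • n) R := by
    refine h.closure_subset_closedBall (closure_mono hball ?_)
    simp [closure_ball x hδ.ne', norm_smul, h.norm_eq_one]
  rw [mem_closedBall_sub_smul_iff h.norm_eq_one hR.le, ← sub_sub, inner_sub_left,
    real_inner_smul_left, real_inner_self_eq_norm_sq, h.norm_eq_one] at hmem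
  have hnorm : ‖p - x‖ = dist x p := by rw [dist_comm, dist_eq_norm]
  have hinner : ⟪p - x, n⟫ = ‖p - x‖ * ‖n‖ := by
    refine (real_inner_le_norm _ _).antisymm ?_
    rw [h.norm_eq_one, hnorm]
    have := nonneg_of_mul_nonneg_right ((sq_nonneg _).trans hmem) (by positivity)
    linarith
  have := inner_eq_norm_mul_iff_real.1 hinner
  rw [h.norm_eq_one, one_smul, hnorm] at this
  exact eq_add_of_sub_eq' this

lemma abs_inner_le_and_norm_sq_le (h : HasTangentBallsAt D ρ R (x + δ • n) n) (hR : 0 < R)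
    (hadd : x + q ∈ closure D) (hsub : x - q ∈ closure D) :
    |⟪q, n⟫| ≤ δ ∧ ‖q‖ ^ 2 ≤ 2 * R * δ := by
  have hexpand : ∀ q, x + q ∈ closure D →
      ‖q‖ ^ 2 - 2 * δ * ⟪q, n⟫ + δ ^ 2 ≤ 2 * R * (δ - ⟪q, n⟫) ∧ ⟪q, n⟫ ≤ δ := fun q hq ↦ by
    have hmem := h.closure_subset_closedBall hq
    rw [mem_closedBall_sub_smul_iff h.norm_eq_one hR.le, add_sub_add_left_eq_sub,
      add_sub_add_left_eq_sub, inner_sub_left, real_inner_smul_left, real_inner_self_eq_norm_sq,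
      h.norm_eq_one, one_pow, mul_one] at hmem
    have hinner := nonneg_of_mul_nonneg_right ((sq_nonneg _).trans hmem) (by positivity)
    rw [norm_sub_sq_real, real_inner_smul_right, norm_smul, h.norm_eq_one, mul_one,
      Real.norm_eq_abs, sq_abs] at hmem
    exact ⟨by linarith, by linarith⟩
  obtain ⟨hsq, hle⟩ := hexpand q hadd
  obtain ⟨hsq', hle'⟩ := hexpand (-q) (by rwa [← sub_eq_add_neg])
  rw [inner_neg_left] at hsq' hle'
  rw [norm_neg] at hsq'
  -- Adding the inequalities for `q` and `-q` cancels their linear terms.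
  exact ⟨abs_le.2 ⟨by linarith, hle⟩, by linarith [sq_nonneg δ]⟩

lemma add_mem_of_abs_inner_le (h : HasTangentBallsAt D ρ R (x + δ • n) n) (hρ : 0 < ρ)
    (hδ : 0 < δ) (hball : ball x δ ⊆ D) (hinner : |⟪q, n⟫| ≤ δ / 2) (hq : ‖q‖ ^ 2 < ρ * δ) :
    x + q ∈ D := by
  rcases le_or_gt δ ρ with hδρ | hρδ
  · apply h.ball_subset
    rw [mem_ball_sub_smul_iff h.norm_eq_one hρ.le, add_sub_add_left_eq_sub,
      add_sub_add_left_eq_sub, inner_sub_left, real_inner_smul_left, real_inner_self_eq_norm_sq,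
      norm_sub_sq_real, real_inner_smul_right, norm_smul, h.norm_eq_one, Real.norm_of_nonneg hδ.le]
    nlinarith [mul_le_mul_of_nonneg_left (le_of_abs_le hinner) (sub_nonneg.2 hδρ)]
  · apply hball
    rw [mem_ball_iff_norm, add_sub_cancel_left, ← sq_lt_sq₀ (norm_nonneg _) hδ.le]
    nlinarith

end HasTangentBallsAt

lemma exists_hasTangentBallsAt_add_smul [FiniteDimensional ℝ E] [Nontrivial E] {D : Set E}
    {ρ R : ℝ} {x : E} (hDo : IsOpen D) (hDb : Bornology.IsBounded D) (hρ : 0 < ρ)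
    (hballs : ∀ p ∈ frontier D, ∃ n, HasTangentBallsAt D ρ R p n) (hx : x ∈ D) :
    ∃ δ > 0, ball x δ ⊆ D ∧ ∃ n, HasTangentBallsAt D ρ R (x + δ • n) n := by
  have huniv : D ≠ univ := by
    rintro rfl
    exact NormedSpace.unbounded_univ ℝ E hDb
  obtain ⟨p, hp, hdist⟩ := exists_mem_frontier_infDist_compl_eq_dist hx huniv
  have hball : ball x (dist x p) ⊆ D := hdist ▸ ball_infDist_compl_subset
  have hpD : p ∉ D := fun h ↦ hp.2 (hDo.interior_eq.symm ▸ h)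
  have hδ : 0 < dist x p := dist_pos.2 (ne_of_mem_of_not_mem hx hpD)
  obtain ⟨n, hn⟩ := hballs p hp
  have hR : 0 < R := hρ.trans_le (hn.radius_le hρ)
  exact ⟨dist x p, hδ, hball, n, hn.eq_add_smul_of_ball_subset hR hδ hball ▸ hn⟩

end TangentBalls

section CurvedBoundary

variable {E : Type*} [NormedAddCommGroup E] [InnerProductSpace ℝ E] [FiniteDimensional ℝ E]
  {D U : Set E} {u : E → ℝ} {p : E}

/-- The unit normal `∇u(p) / ‖∇u(p)‖` of the level set of `u` through `p`, pointing to larger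
values of `u`. -/
def unitNormal (u : E → ℝ) (p : E) : E := ‖gradient u p‖⁻¹ • gradient u p

lemma norm_unitNormal (hp : fderiv ℝ u p ≠ 0) : ‖unitNormal u p‖ = 1 := by
  have hgrad : gradient u p ≠ 0 := by simpa [gradient] using hp
  rw [unitNormal, norm_smul, norm_inv, norm_norm, inv_mul_cancel₀ (norm_ne_zero_iff.2 hgrad)]

lemma fderiv_eq_norm_mul_inner_unitNormal (hp : fderiv ℝ u p ≠ 0) (w : E) :
    fderiv ℝ u p w = ‖fderiv ℝ u p‖ * ⟪w, unitNormal u p⟫ := by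
  have hnorm : ‖gradient u p‖ = ‖fderiv ℝ u p‖ := by rw [gradient, LinearIsometryEquiv.norm_map]
  rw [unitNormal, hnorm, real_inner_smul_right, mul_inv_cancel_left₀ (norm_ne_zero_iff.2 hp),
    real_inner_comm, inner_gradient_left]

namespace IsC2DefiningFunction

lemma exists_forall_ball_subset (hu : IsC2DefiningFunction D U u) (hD : Bornology.IsBounded D) :
    ∃ ρ > 0, ∀ p ∈ frontier D, ball (p - ρ • unitNormal u p) ρ ⊆ D := by
  have hcompact := isCompact_frontier_of_isBounded hD
  obtain ⟨m, hm, hmle⟩ := hcompact.exists_forall_le'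
    (hu.continuousOn_fderiv.mono hu.frontier_subset).norm
    fun p hp ↦ norm_pos_iff.2 (hu.fderiv_ne_zero p hp)
  obtain ⟨ε, hε, hεU, L, hL, hhess⟩ := exists_cthickening_subset_and_norm_le
    (F := E →L[ℝ] E →L[ℝ] ℝ) hcompact hu.isOpen hu.frontier_subset
    (continuousOn_fderiv_fderiv_of_contDiffOn hu.isOpen hu.contDiffOn)
  refine ⟨min (ε / 2) (m / L), by positivity, fun p hp y hy ↦ ?_⟩
  set ρ := min (ε / 2) (m / L)
  have hρ : 0 < ρ := by positivity
  have hn := norm_unitNormal (hu.fderiv_ne_zero p hp)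
  rw [mem_ball_sub_smul_iff hn hρ.le] at hy
  have hinner : 0 < ⟪p - y, unitNormal u p⟫ :=
    pos_of_mul_pos_right ((sq_nonneg _).trans_lt hy) (by positivity)
  have hyε : ‖y - p‖ ≤ ε := by
    have hcauchy : ⟪p - y, unitNormal u p⟫ ≤ ‖y - p‖ := by
      simpa [hn, norm_sub_rev] using real_inner_le_norm (p - y) (unitNormal u p)
    nlinarith [min_le_left (ε / 2) (m / L)]
  have hseg : ∀ s ∈ Icc (0 : ℝ) 1, p + s • (y - p) ∈ cthickening ε (frontier D) := fun s hs ↦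
    closedBall_subset_cthickening hp ε <| (convex_closedBall p ε).add_smul_sub_mem
      (mem_closedBall_self hε.le) (mem_closedBall_iff_norm.2 hyε) hs
  have htaylor := le_add_fderiv_add_half_mul_sq (a := L * ‖y - p‖ ^ 2) hu.isOpen hu.contDiffOn
    zero_le_one (fun s hs ↦ hεU (hseg s hs)) fun s hs ↦ by
      refine (Real.le_norm_self _).trans ((ContinuousLinearMap.le_opNorm₂ _ _ _).trans ?_)
      rw [mul_assoc, ← sq]
      exact mul_le_mul_of_nonneg_right (hhess _ (hseg s hs)) (sq_nonneg _)
  rw [one_smul, add_sub_cancel, hu.eq_zero hp, ← neg_sub p y, map_neg,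
    fderiv_eq_norm_mul_inner_unitNormal (hu.fderiv_ne_zero p hp), norm_neg] at htaylor
  rw [← neg_sub, norm_neg] at hy
  have hρL : L * ρ ≤ ‖fderiv ℝ u p‖ :=
    ((le_div_iff₀' hL).1 (min_le_right _ _)).trans (hmle p hp)
  refine hu.mem_of_neg (by simpa using hεU (hseg 1 (by simp))) ?_
  nlinarith [mul_lt_mul_of_pos_left hy hL, mul_le_mul_of_nonneg_right hρL hinner.le]

lemma exists_forall_subset_closedBall (hu : IsC2DefiningFunction D U u)
    (hDb : Bornology.IsBounded D) (hDc : Convex ℝ D)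
    (hpos : ∀ p ∈ frontier D, ∀ w ≠ 0, fderiv ℝ u p w = 0 → 0 < fderiv ℝ (fderiv ℝ u) p w w) :
    ∃ R, ∀ p ∈ frontier D, D ⊆ closedBall (p - R • unitNormal u p) R := by
  obtain ⟨k, hk, hsep⟩ := hu.exists_forall_mul_norm_sub_sq_le_neg_fderiv hDb hDc hpos
  obtain ⟨M, hM⟩ := (isCompact_frontier_of_isBounded hDb).exists_bound_of_continuousOn
    (hu.continuousOn_fderiv.mono hu.frontier_subset)
  refine ⟨M / (2 * k), fun p hp y hy ↦ ?_⟩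
  have hfderiv := hu.fderiv_ne_zero p hp
  have hM0 : 0 < M := (norm_pos_iff.2 hfderiv).trans_le (hM p hp)
  have hky := hsep p hp y hy
  rw [fderiv_eq_norm_mul_inner_unitNormal hfderiv, ← mul_neg, ← inner_neg_left, neg_sub] at hky
  have hinner : 0 ≤ ⟪p - y, unitNormal u p⟫ :=
    nonneg_of_mul_nonneg_right (le_trans (by positivity) hky) (norm_pos_iff.2 hfderiv)
  rw [mem_closedBall_sub_smul_iff (norm_unitNormal hfderiv) (by positivity)]
  calc ‖y - p‖ ^ 2 ≤ M * ⟪p - y, unitNormal u p⟫ / k := by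
        rw [le_div_iff₀' hk]
        exact hky.trans (mul_le_mul_of_nonneg_right (hM p hp) hinner)
    _ = 2 * (M / (2 * k)) * ⟪p - y, unitNormal u p⟫ := by field_simp

end IsC2DefiningFunction

end CurvedBoundary

section FlatDisks

variable {d : ℕ} {D : Set (Euc d)} {x v w : Euc d} {r : ℝ}

/-- The affine map `z ↦ x + z₀ v + z₁ w`; for `v`, `w` orthogonal of equal length it sends the unit
disk to a flat round disk centred at `x`, a competitor for the minimal metric at `x`. -/
def affineDisk (x v w : Euc d) (z : Euc 2) : Euc d := x + (z 0 • v + z 1 • w)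

lemma hasFDerivAt_affineDisk (x v w : Euc d) (z : Euc 2) :
    HasFDerivAt (affineDisk x v w) ((EuclideanSpace.proj (𝕜 := ℝ) (0 : Fin 2)).smulRight v +
      (EuclideanSpace.proj (𝕜 := ℝ) (1 : Fin 2)).smulRight w) z :=
  HasFDerivAt.const_add x (ContinuousLinearMap.hasFDerivAt
    ((EuclideanSpace.proj (𝕜 := ℝ) (0 : Fin 2)).smulRight v +
      (EuclideanSpace.proj (𝕜 := ℝ) (1 : Fin 2)).smulRight w))

lemma pd_zero_affineDisk (x v w : Euc d) : pd 0 (affineDisk x v w) = fun _ ↦ v := by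
  ext1 z
  simp [pd, (hasFDerivAt_affineDisk x v w z).fderiv]

lemma pd_one_affineDisk (x v w : Euc d) : pd 1 (affineDisk x v w) = fun _ ↦ w := by
  ext1 z
  simp [pd, (hasFDerivAt_affineDisk x v w z).fderiv]

lemma conformalHarmonicOnDisk_affineDisk (x : Euc d) (hnorm : ‖v‖ = ‖w‖) (hvw : ⟪v, w⟫ = 0) :
    ConformalHarmonicOnDisk (affineDisk x v w) := by
  refine ⟨ContDiff.contDiffOn ?_, ?_, ?_⟩
  · unfold affineDisk
    fun_prop
  · simp [pd_zero_affineDisk, pd_one_affineDisk]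
  · simp [pd_zero_affineDisk, pd_one_affineDisk, hnorm, hvw]

lemma minMetric_le_one_div {f : Euc 2 → Euc d} (hr : 0 < r) (hf : ConformalHarmonicOnDisk f)
    (hfD : ∀ z ∈ unitDisk, f z ∈ D) (hf0 : f 0 = x) (hpd : pd 0 f 0 = r • v) :
    minMetric D x v ≤ 1 / r := by
  refine csInf_le ⟨0, ?_⟩ ⟨r, hr, rfl, f, hf, hfD, hf0, hpd⟩
  rintro c ⟨r, hr, rfl, -⟩
  positivity

lemma minMetric_le_one_div_of_disk_subset (hr : 0 < r) (hnorm : ‖v‖ = ‖w‖) (hvw : ⟪v, w⟫ = 0)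
    (hdisk : ∀ a b : ℝ, a ^ 2 + b ^ 2 < r ^ 2 → x + (a • v + b • w) ∈ D) :
    minMetric D x v ≤ 1 / r := by
  refine minMetric_le_one_div hr (f := affineDisk x (r • v) (r • w))
    (conformalHarmonicOnDisk_affineDisk x ?_ ?_) (fun z hz ↦ ?_) ?_ ?_
  · rw [norm_smul, norm_smul, hnorm]
  · rw [real_inner_smul_left, real_inner_smul_right, hvw, mul_zero, mul_zero]
  · rw [unitDisk, mem_ball_zero_iff, ← sq_lt_one_iff₀ (norm_nonneg z),
      EuclideanSpace.real_norm_sq_eq, Fin.sum_univ_two] at hz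
    rw [affineDisk, smul_smul, smul_smul]
    refine hdisk _ _ ?_
    rw [mul_pow, mul_pow, ← add_mul]
    exact mul_lt_of_lt_one_left (by positivity) hz
  · simp [affineDisk]
  · rw [pd_zero_affineDisk]

lemma minMetric_zero_right_nonpos (hx : x ∈ D) : minMetric D x 0 ≤ 0 := by
  refine le_of_forall_pos_le_add fun ε hε ↦ ?_
  have := minMetric_le_one_div_of_disk_subset (D := D) (x := x) (v := 0) (w := 0)
    (one_div_pos.2 hε) rfl (inner_zero_left _) (by simpa using fun _ _ _ ↦ hx)
  rwa [one_div_one_div, ← zero_add ε] at this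

lemma exists_norm_eq_and_inner_eq_zero {E : Type*} [NormedAddCommGroup E] [InnerProductSpace ℝ E]
    [FiniteDimensional ℝ E] (hE : 3 ≤ Module.finrank ℝ E) (v n : E) :
    ∃ w : E, ‖v‖ = ‖w‖ ∧ ⟪v, w⟫ = 0 ∧ ⟪n, w⟫ = 0 := by
  classical
  set K := Submodule.span ℝ (({v, n} : Finset E) : Set E)
  have hfinrank : Module.finrank ℝ K ≤ 2 :=
    (finrank_span_finset_le_card _).trans Finset.card_le_two
  have : Nontrivial Kᗮ :=
    Module.finrank_pos_iff (R := ℝ).1 (by have := K.finrank_add_finrank_orthogonal; omega)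
  obtain ⟨w, hw⟩ := exists_norm_eq Kᗮ (norm_nonneg v)
  exact ⟨w, hw.symm, w.2 v (Submodule.subset_span (by simp)),
    w.2 n (Submodule.subset_span (by simp))⟩

lemma norm_smul_add_smul_sq_of_inner_eq_zero {E : Type*} [NormedAddCommGroup E]
    [InnerProductSpace ℝ E] {v w : E} (hnorm : ‖v‖ = ‖w‖) (hvw : ⟪v, w⟫ = 0) (a b : ℝ) :
    ‖a • v + b • w‖ ^ 2 = (a ^ 2 + b ^ 2) * ‖v‖ ^ 2 := by
  rw [norm_add_sq_real, real_inner_smul_left, real_inner_smul_right, hvw, norm_smul, norm_smul,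
    mul_pow, mul_pow, Real.norm_eq_abs, Real.norm_eq_abs, sq_abs, sq_abs, ← hnorm]
  ring

end FlatDisks

section Chords

variable {d : ℕ} {D : Set (Euc d)} {x v : Euc d} {s : ℝ}

lemma chordParam_nonneg (D : Set (Euc d)) (x v : Euc d) : 0 ≤ chordParam D x v :=
  Real.sInf_nonneg fun _ hs ↦ hs.1.le

lemma hilbertFinsler_nonneg (D : Set (Euc d)) (x v : Euc d) : 0 ≤ hilbertFinsler D x v := by
  have := chordParam_nonneg D x v
  have := chordParam_nonneg D x (-v)
  unfold hilbertFinsler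
  positivity

lemma chordParam_zero_right (hx : x ∈ D) : chordParam D x 0 = 0 := by
  simp [chordParam, hx]

lemma hilbertFinsler_zero_right (hx : x ∈ D) : hilbertFinsler D x 0 = 0 := by
  simp [hilbertFinsler, chordParam_zero_right hx]

lemma add_smul_mem_closure_of_le_chordParam (hx : x ∈ D) (hs : 0 ≤ s)
    (hle : s ≤ chordParam D x v) : x + s • v ∈ closure D := by
  rcases hs.eq_or_lt with rfl | hs
  · simpa using subset_closure hx
  have hmaps : MapsTo (fun t : ℝ ↦ x + t • v) (Ioo 0 s) D := fun t ht ↦ by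
    by_contra hmem
    exact ((ht.2.trans_le hle).not_ge) (csInf_le ⟨0, fun _ h ↦ h.1.le⟩ ⟨ht.1, hmem⟩)
  refine hmaps.closure (by fun_prop) ?_
  rw [closure_Ioo hs.ne]
  exact right_mem_Icc.2 hs.le

lemma chordParam_pos (hDo : IsOpen D) (hDb : Bornology.IsBounded D) (hx : x ∈ D) (hv : v ≠ 0) :
    0 < chordParam D x v := by
  have hnorm : 0 < ‖v‖ := norm_pos_iff.2 hv
  obtain ⟨B, hB⟩ := hDb.subset_ball_lt 0 x
  have hexit : {s : ℝ | 0 < s ∧ x + s • v ∉ D}.Nonempty := by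
    refine ⟨B / ‖v‖, div_pos hB.1 hnorm, fun hmem ↦ ?_⟩
    have := hB.2 hmem
    simp [norm_smul, abs_of_pos hB.1, hnorm.ne'] at this
  obtain ⟨ε, hε, hball⟩ := isOpen_iff.1 hDo x hx
  refine (div_pos hε hnorm).trans_le (le_csInf hexit fun s hs ↦ ?_)
  by_contra! hlt
  refine hs.2 (hball ?_)
  rwa [mem_ball_iff_norm, add_sub_cancel_left, norm_smul, Real.norm_of_nonneg hs.1.le,
    ← lt_div_iff₀ hnorm]

lemma one_div_min_chordParam_le (D : Set (Euc d)) (x v : Euc d) :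
    1 / min (chordParam D x v) (chordParam D x (-v)) ≤ 2 * hilbertFinsler D x v := by
  have hpos := one_div_nonneg.2 (chordParam_nonneg D x v)
  have hneg := one_div_nonneg.2 (chordParam_nonneg D x (-v))
  rw [hilbertFinsler, ← mul_assoc, mul_one_div_cancel two_ne_zero, one_mul]
  rcases min_choice (chordParam D x v) (chordParam D x (-v)) with h | h <;> rw [h] <;> linarith

end Chords

section Comparison

variable {d : ℕ} {D : Set (Euc d)} {ρ R δ s : ℝ} {x v n : Euc d}

lemma HasTangentBallsAt.minMetric_le_one_div (h : HasTangentBallsAt D ρ R (x + δ • n) n)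
    (hd : 3 ≤ d) (hρ : 0 < ρ) (hδ : 0 < δ) (hball : ball x δ ⊆ D) (hs : 0 < s)
    (hadd : x + s • v ∈ closure D) (hsub : x - s • v ∈ closure D) :
    minMetric D x v ≤ 1 / (ρ / (2 * R) * s) := by
  have hρR := h.radius_le hρ
  have hR : 0 < R := hρ.trans_le hρR
  -- Shrinking the symmetric chord `x ± s • v` by `κ` turns the bounds forced by the outer ball
  -- into those which the inner ball requires.
  set κ := ρ / (2 * R) with hκ
  have hκ0 : 0 < κ := by positivity
  have hκR : κ * (2 * R) = ρ := div_mul_cancel₀ _ (by positivity)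
  have hκle : κ ≤ 1 / 2 := by rw [hκ, div_le_iff₀ (by positivity)]; linarith
  obtain ⟨hinner, hnorm⟩ := h.abs_inner_le_and_norm_sq_le hR hadd hsub
  rw [real_inner_smul_left, abs_mul, abs_of_pos hs] at hinner
  rw [norm_smul, mul_pow, Real.norm_of_nonneg hs.le] at hnorm
  obtain ⟨w, hvw_norm, hvw, hnw⟩ :=
    exists_norm_eq_and_inner_eq_zero (by rwa [finrank_euclideanSpace_fin]) v n
  refine minMetric_le_one_div_of_disk_subset (by positivity) hvw_norm hvw fun a b hab ↦
    h.add_mem_of_abs_inner_le hρ hδ hball ?_ ?_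
  · have ha : |a| ≤ κ * s := abs_le_of_sq_le_sq (by linarith [sq_nonneg b]) (by positivity)
    rw [inner_add_left, real_inner_smul_left, real_inner_smul_left, real_inner_comm n w, hnw,
      mul_zero, add_zero, abs_mul]
    calc |a| * |⟪v, n⟫| ≤ κ * s * |⟪v, n⟫| := by gcongr
      _ = κ * (s * |⟪v, n⟫|) := mul_assoc _ _ _
      _ ≤ 1 / 2 * δ := by gcongr
      _ = δ / 2 := one_div_mul_eq_div _ _
  · calc ‖a • v + b • w‖ ^ 2 = (a ^ 2 + b ^ 2) * ‖v‖ ^ 2 :=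
          norm_smul_add_smul_sq_of_inner_eq_zero hvw_norm hvw a b
      _ ≤ (κ * s) ^ 2 * ‖v‖ ^ 2 := by gcongr
      _ = κ ^ 2 * (s ^ 2 * ‖v‖ ^ 2) := by ring
      _ ≤ κ ^ 2 * (2 * R * δ) := by gcongr
      _ = κ * (ρ * δ) := by rw [← hκR]; ring
      _ < ρ * δ := mul_lt_of_lt_one_left (by positivity) (by linarith)

theorem minMetric_le_mul_hilbertFinsler_of_hasTangentBallsAt (hd : 3 ≤ d) (hDo : IsOpen D)
    (hDb : Bornology.IsBounded D) (hρ : 0 < ρ)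
    (hballs : ∀ p ∈ frontier D, ∃ n, HasTangentBallsAt D ρ R p n) (hx : x ∈ D) (v : Euc d) :
    minMetric D x v ≤ 4 * R / ρ * hilbertFinsler D x v := by
  rcases eq_or_ne v 0 with rfl | hv
  · rw [hilbertFinsler_zero_right hx, mul_zero]
    exact minMetric_zero_right_nonpos hx
  have : Nontrivial (Euc d) := ⟨v, 0, hv⟩
  obtain ⟨δ, hδ, hball, n, hn⟩ := exists_hasTangentBallsAt_add_smul hDo hDb hρ hballs hx
  have hR : 0 < R := hρ.trans_le (hn.radius_le hρ)
  set s := min (chordParam D x v) (chordParam D x (-v))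
  have hs : 0 < s :=
    lt_min (chordParam_pos hDo hDb hx hv) (chordParam_pos hDo hDb hx (neg_ne_zero.2 hv))
  have hadd := add_smul_mem_closure_of_le_chordParam hx hs.le (min_le_left _ _)
  have hsub := add_smul_mem_closure_of_le_chordParam hx hs.le (min_le_right _ _)
  rw [smul_neg, ← sub_eq_add_neg] at hsub
  calc minMetric D x v ≤ 1 / (ρ / (2 * R) * s) :=
        hn.minMetric_le_one_div hd hρ hδ hball hs hadd hsub
    _ = 2 * R / ρ * (1 / s) := by field_simp
    _ ≤ 2 * R / ρ * (2 * hilbertFinsler D x v) := by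
        gcongr
        exact one_div_min_chordParam_le D x v
    _ = 4 * R / ρ * hilbertFinsler D x v := by ring

end Comparison

section StrongConvexity

variable {d : ℕ} {D U : Set (Euc d)} {u : Euc d → ℝ} {x : Euc d}

lemma hessQ_eq_fderiv_fderiv (hU : IsOpen U) (hu : ContDiffOn ℝ 2 u U) (hx : x ∈ U)
    (v : Euc d) : hessQ u x v = fderiv ℝ (fderiv ℝ u) x v v := by
  rw [hessQ, fderiv_clm_apply (differentiableAt_fderiv_of_contDiffOn hU hu hx) (by fun_prop)]
  simp

lemma exists_forall_hasTangentBallsAt_of_isStronglyConvexDomain (hD : IsStronglyConvexDomain D) :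
    ∃ ρ > 0, ∃ R, ∀ p ∈ frontier D, ∃ n, HasTangentBallsAt D ρ R p n := by
  obtain ⟨-, -, hDb, hDc, U, u, hUo, hDU, hu, hinter, hfrontier, hfderiv, hhess⟩ := hD
  have hdef : IsC2DefiningFunction D U u := ⟨hUo, hDU, hu, hinter, hfrontier, hfderiv⟩
  obtain ⟨ρ, hρ, hball⟩ := hdef.exists_forall_ball_subset hDb
  obtain ⟨R, hclosedBall⟩ := hdef.exists_forall_subset_closedBall hDb hDc fun p hp w hw hpw ↦
    hessQ_eq_fderiv_fderiv hUo hu (hDU hp) w ▸ hhess p hp w hw hpw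
  exact ⟨ρ, hρ, R, fun p hp ↦
    ⟨unitNormal u p, norm_unitNormal (hfderiv p hp), hball p hp, hclosedBall p hp⟩⟩

end StrongConvexity

/-- In a strongly convex domain `D ⊆ ℝ^d` (`d ≥ 3`) the minimal metric
is dominated by a constant multiple of the Hilbert metric. -/
theorem minimal_le_const_mul_hilbert_of_strongly_convex
    (d : ℕ) (hd : 3 ≤ d) (D : Set (Euc d)) (hD : IsStronglyConvexDomain D) :
    ∃ A : ℝ, 1 ≤ A ∧ ∀ x ∈ D, ∀ v : Euc d,
      minMetric D x v ≤ A * hilbertFinsler D x v := by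
  obtain ⟨ρ, hρ, R, hballs⟩ := exists_forall_hasTangentBallsAt_of_isStronglyConvexDomain hD
  refine ⟨max 1 (4 * R / ρ), le_max_left _ _, fun x hx v ↦ ?_⟩
  calc minMetric D x v ≤ 4 * R / ρ * hilbertFinsler D x v :=
        minMetric_le_mul_hilbertFinsler_of_hasTangentBallsAt hd hD.1 hD.2.2.1 hρ hballs hx v
    _ ≤ max 1 (4 * R / ρ) * hilbertFinsler D x v :=
        mul_le_mul_of_nonneg_right (le_max_right _ _) (hilbertFinsler_nonneg D x v)
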